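/- arXiv:1602.01133 — 2 statements merged into one kernel-verified Lean document; each statement's English description precedes it below -/
import Mathlib

section
/- Every non-negative integer m can be written as m = 2·T_x + T_y + T_z for some non-negative integers x, y, z. -/
/-- The `k`-th triangular number. -/
def T (k : ℕ) : ℕ := k * (k + 1) / 2

/-- Reduction of a residue modulo `a` to the interval `[-a/2, a/2]`. -/
theorem exists_two_mul_add_mul_abs_le (u a : ℤ) (ha : 0 < a) :
    ∃ t : ℤ, |2 * (u + t * a)| ≤ a := by
  refine ⟨-((2 * u + a) / (2 * a)), ?_⟩
  have h1 := Int.emod_add_mul_ediv (2 * u + a) (2 * a)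
  have h2 := Int.emod_nonneg (2 * u + a) (by omega : 2 * a ≠ 0)
  have h3 := Int.emod_lt_of_pos (2 * u + a) (by omega : 0 < 2 * a)
  rw [abs_le]
  constructor <;> nlinarith

/-- Hermite's bound: a reduced positive definite ternary form of determinant one is the
sum of three squares. -/
theorem eq_one_of_reduced_ternary (a b c d e f : ℤ) (ha : 0 < a) (hK : 0 < a * b - f ^ 2)
    (hdet : a * b * c + 2 * d * e * f - a * d ^ 2 - b * e ^ 2 - c * f ^ 2 = 1)
    (hf : |2 * f| ≤ a) (he : |2 * e| ≤ a) (hd : |2 * (a * d - e * f)| ≤ a * b - f ^ 2)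
    (hab : a ≤ b) (hG : a * b - f ^ 2 ≤ a * c - e ^ 2) :
    a = 1 ∧ b = 1 ∧ c = 1 ∧ d = 0 ∧ e = 0 ∧ f = 0 := by
  obtain ⟨K, hKdef⟩ : ∃ K, K = a * b - f ^ 2 := ⟨_, rfl⟩
  rw [← hKdef] at hK hd hG
  have hf2 : 4 * f ^ 2 ≤ a ^ 2 := by
    have := sq_le_sq' (abs_le.1 hf).1 (abs_le.1 hf).2
    linarith
  have hd2 : 4 * (a * d - e * f) ^ 2 ≤ K ^ 2 := by
    have := sq_le_sq' (abs_le.1 hd).1 (abs_le.1 hd).2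
    linarith
  have hminor : K * (a * c - e ^ 2) = a + (a * d - e * f) ^ 2 := by
    rw [hKdef]
    linear_combination a * hdet
  have hK2 : 3 * K ^ 2 ≤ 4 * a := by nlinarith
  have ha2 : 3 * a ^ 2 ≤ 4 * K := by nlinarith
  have ha1 : a = 1 := by
    by_contra hne
    have h2 : 2 ≤ a := by omega
    have hKa : K < a := by
      by_contra! h
      nlinarith
    nlinarith
  have hK1 : K = 1 := by
    subst ha1
    nlinarith
  subst ha1
  have hf0 : f = 0 := by
    have := abs_le.1 hf
    omega
  have he0 : e = 0 := by
    have := abs_le.1 he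
    omega
  subst hf0 he0
  have hd0 : d = 0 := by
    have := abs_le.1 hd
    omega
  subst hd0
  have hb : b = 1 := by linarith
  subst hb
  refine ⟨rfl, rfl, ?_, rfl, rfl, rfl⟩
  linarith

/-- A positive definite integral ternary form of determinant one represents only sums of
three squares. -/
theorem exists_sum_three_sq_of_ternary (a b c d e f : ℤ) (ha : 0 < a)
    (hK : 0 < a * b - f ^ 2)
    (hdet : a * b * c + 2 * d * e * f - a * d ^ 2 - b * e ^ 2 - c * f ^ 2 = 1)
    (x y z : ℤ) :
    ∃ p q r : ℤ, a * x ^ 2 + b * y ^ 2 + c * z ^ 2 + 2 * d * y * z + 2 * e * x * z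
      + 2 * f * x * y = p ^ 2 + q ^ 2 + r ^ 2 := by
  obtain ⟨s, hs⟩ := exists_two_mul_add_mul_abs_le (a * d - e * f) (a * b - f ^ 2) hK
  obtain ⟨t, ht⟩ := exists_two_mul_add_mul_abs_le f a ha
  obtain ⟨u, hu⟩ := exists_two_mul_add_mul_abs_le (e + s * f) a ha
  obtain ⟨f', hf'⟩ : ∃ f', f' = f + t * a := ⟨_, rfl⟩
  obtain ⟨e', he'⟩ : ∃ e', e' = e + s * f + u * a := ⟨_, rfl⟩
  obtain ⟨b', hb'⟩ : ∃ b', b' = b + 2 * t * f + t ^ 2 * a := ⟨_, rfl⟩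
  obtain ⟨d', hd'⟩ : ∃ d', d' = d + s * b + t * (e + s * f) + u * f + t * u * a := ⟨_, rfl⟩
  obtain ⟨c', hc'⟩ : ∃ c', c' = c + 2 * s * d + s ^ 2 * b + 2 * u * (e + s * f) + u ^ 2 * a :=
    ⟨_, rfl⟩
  have hKeq : a * b' - f' ^ 2 = a * b - f ^ 2 := by
    rw [hb', hf']
    ring
  have hK' : 0 < a * b' - f' ^ 2 := hKeq ▸ hK
  have hdet' : a * b' * c' + 2 * d' * e' * f' - a * d' ^ 2 - b' * e' ^ 2 - c' * f' ^ 2 = 1 := by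
    rw [hb', hc', hd', he', hf']
    linear_combination hdet
  have hGeq : a * d' - e' * f' = a * d - e * f + s * (a * b - f ^ 2) := by
    rw [hd', he', hf']
    ring
  have hminor : (a * b' - f' ^ 2) * (a * c' - e' ^ 2) = a + (a * d' - e' * f') ^ 2 := by
    linear_combination a * hdet'
  have hG' : 0 < a * c' - e' ^ 2 := by
    refine pos_of_mul_pos_right (a := a * b' - f' ^ 2) ?_ hK'.le
    rw [hminor]
    positivity
  have hb0 : 0 < b' := by
    refine pos_of_mul_pos_right (a := a) ?_ ha.le
    nlinarith [sq_nonneg f']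
  obtain ⟨z', hz'⟩ : ∃ z', z' = z := ⟨_, rfl⟩
  obtain ⟨y', hy'⟩ : ∃ y', y' = y - s * z := ⟨_, rfl⟩
  obtain ⟨x', hx'⟩ : ∃ x', x' = x - t * y' - u * z := ⟨_, rfl⟩
  have hval : a * x ^ 2 + b * y ^ 2 + c * z ^ 2 + 2 * d * y * z + 2 * e * x * z
      + 2 * f * x * y = a * x' ^ 2 + b' * y' ^ 2 + c' * z ^ 2 + 2 * d' * y' * z
      + 2 * e' * x' * z + 2 * f' * x' * y' := by
    rw [hx', hy', hb', hc', hd', he', hf']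
    ring
  rw [hval]
  by_cases h1 : b' < a
  · obtain ⟨p, q, r, h⟩ := exists_sum_three_sq_of_ternary b' a c' e' d' f' hb0
      (by linarith) (by linarith) y' x' z
    exact ⟨p, q, r, by linarith⟩
  by_cases h2 : a * c' - e' ^ 2 < a * b - f ^ 2
  · obtain ⟨p, q, r, h⟩ := exists_sum_three_sq_of_ternary a c' b' d' f' e' ha
      hG' (by linarith) x' z y'
    exact ⟨p, q, r, by linarith⟩
  obtain ⟨g1, g2, g3, g4, g5, g6⟩ := eq_one_of_reduced_ternary a b' c' d' e' f' ha hK' hdet'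
    (hf' ▸ ht) (he' ▸ hu) (by rw [hGeq, hKeq]; exact hs) (by linarith) (by linarith)
  refine ⟨x', y', z, ?_⟩
  rw [g1, g2, g3, g4, g5, g6]
  ring
termination_by (a.toNat, (a * b - f ^ 2).toNat)
decreasing_by
  · exact Prod.Lex.left _ _ (by omega)
  · exact Prod.Lex.right _ (by omega)

/-- If `-d` is a square modulo `d * n - 1`, then `n` is a sum of three squares. -/
theorem exists_sum_three_sq_of_dvd (n d y : ℤ) (hd : 0 < d) (hp : 0 < d * n - 1)
    (h : d * n - 1 ∣ y ^ 2 + d) : ∃ p q r : ℤ, n = p ^ 2 + q ^ 2 + r ^ 2 := by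
  obtain ⟨a, ha⟩ := h
  have ha0 : 0 < a := by
    refine pos_of_mul_pos_right (a := d * n - 1) ?_ hp.le
    rw [← ha]
    positivity
  obtain ⟨p, q, r, h⟩ := exists_sum_three_sq_of_ternary a (d * n - 1) n 0 1 y ha0
    (by linarith) (by linear_combination (-n) * ha) 0 0 1
  exact ⟨p, q, r, by linarith⟩

/-- Legendre's three-square theorem for integers congruent to two modulo four. -/
theorem exists_sum_three_sq_of_two_mod_four (m : ℕ) :
    ∃ p q r : ℤ, 4 * (m : ℤ) + 2 = p ^ 2 + q ^ 2 + r ^ 2 := by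
  have hcop : Nat.Coprime (4 * m + 1) (4 * (4 * m + 2)) := by
    refine Nat.Coprime.mul_right ?_ ?_
    · simp
    · exact Nat.coprime_self_add_right.2 (Nat.coprime_one_right _)
  obtain ⟨p, -, hp, hmod⟩ := Nat.forall_exists_prime_gt_and_modEq 0 (by omega) hcop
  have := Fact.mk hp
  obtain ⟨j, hj⟩ : ∃ j, p = 4 * (4 * m + 2) * j + (4 * m + 1) := by
    refine ⟨p / (4 * (4 * m + 2)), ?_⟩
    have h1 := Nat.div_add_mod p (4 * (4 * m + 2))
    rw [hmod, Nat.mod_eq_of_lt (by omega)] at h1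
    exact h1.symm
  obtain ⟨d, hd⟩ : ∃ d, d = 4 * j + 1 := ⟨_, rfl⟩
  have hpd : (p : ℤ) = d * (4 * m + 2) - 1 := by
    rw [hj, hd]
    push_cast
    ring
  have hp4 : p % 4 = 1 := by
    rw [hj, mul_assoc]
    omega
  have hpodd : Odd p := Nat.odd_iff.2 (by omega)
  have hdodd : Odd d := Nat.odd_iff.2 (by omega)
  have hJ : jacobiSym (-d) p = 1 := by
    rw [jacobiSym.neg _ hpodd, ZMod.χ₄_nat_one_mod_four hp4, one_mul,
      jacobiSym.quadratic_reciprocity_one_mod_four (by omega) hpodd,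
      jacobiSym.mod_left' (a₂ := -1), jacobiSym.at_neg_one hdodd,
      ZMod.χ₄_nat_one_mod_four (by omega)]
    rw [hpd, sub_eq_add_neg, Int.mul_add_emod_self_left]
  rw [← jacobiSym.legendreSym.to_jacobiSym] at hJ
  have hne : ((-d : ℤ) : ZMod p) ≠ 0 := by
    intro h0
    rw [(legendreSym.eq_zero_iff p _).2 h0] at hJ
    exact zero_ne_one hJ
  obtain ⟨w, hw⟩ := (legendreSym.eq_one_iff p hne).1 hJ
  obtain ⟨y, rfl⟩ := ZMod.intCast_surjective w
  have hdvd : (p : ℤ) ∣ y ^ 2 + d := by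
    rw [← ZMod.intCast_zmod_eq_zero_iff_dvd]
    push_cast at hw ⊢
    linear_combination -hw
  have hppos : (0 : ℤ) < p := by exact_mod_cast hp.pos
  rw [hpd] at hdvd hppos
  exact exists_sum_three_sq_of_dvd _ d y (by omega) hppos hdvd

theorem two_mul_T (k : ℕ) : 2 * T k = k * (k + 1) :=
  Nat.mul_div_cancel' (Nat.even_mul_succ_self k).two_dvd

theorem exists_two_mul_T_eq (w : ℤ) : ∃ k : ℕ, 2 * (T k : ℤ) = w * (w + 1) := by
  have key (k : ℕ) : 2 * (T k : ℤ) = k * (k + 1) := by exact_mod_cast two_mul_T k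
  rcases le_or_gt 0 w with h | h
  · lift w to ℕ using h
    exact ⟨w, key w⟩
  · obtain ⟨k, hk⟩ := Int.eq_ofNat_of_zero_le (by omega : 0 ≤ -w - 1)
    refine ⟨k, ?_⟩
    rw [key, ← hk]
    ring

theorem exists_eq_T_of_odd_odd_even (m : ℕ) (p q r : ℤ)
    (h : 4 * (m : ℤ) + 2 = p ^ 2 + q ^ 2 + r ^ 2) (hp : Odd p) (hq : Odd q) (hr : Even r) :
    ∃ x y z : ℕ, m = 2 * T x + T y + T z := by
  obtain ⟨u, rfl⟩ := hp
  obtain ⟨v, rfl⟩ := hq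
  obtain ⟨w, rfl⟩ := hr
  obtain ⟨x, hx⟩ := exists_two_mul_T_eq u
  obtain ⟨y, hy⟩ := exists_two_mul_T_eq (v + w)
  obtain ⟨z, hz⟩ := exists_two_mul_T_eq (v - w)
  refine ⟨x, y, z, ?_⟩
  zify
  linarith

theorem stmt_6 (m : ℕ) : ∃ x y z : ℕ, m = 2 * T x + T y + T z := by
  obtain ⟨p, q, r, h⟩ := exists_sum_three_sq_of_two_mod_four m
  rcases Int.even_or_odd p with hp | hp <;> rcases Int.even_or_odd q with hq | hq <;>
    rcases Int.even_or_odd r with hr | hr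
  case inl.inr.inr =>
    exact exists_eq_T_of_odd_odd_even m q r p (by linarith) hq hr hp
  case inr.inl.inr =>
    exact exists_eq_T_of_odd_odd_even m p r q (by linarith) hp hr hq
  case inr.inr.inl =>
    exact exists_eq_T_of_odd_odd_even m p q r h hp hq hr
  all_goals
    exfalso
    obtain ⟨u, rfl⟩ := hp
    obtain ⟨v, rfl⟩ := hq
    obtain ⟨w, rfl⟩ := hr
    ring_nf at h
    omega
end

section
/- For every non-negative integer m, the integer 4m + 1 can be written as a sum of three squares a² + b² + c² in which a is even and b, c have different parity. -/
/-- A positive definite ternary quadratic form with integral symmetric matrix of determinant `1`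
takes only values that are sums of three squares. -/
theorem exists_sum_three_sq_of_det_eq_one (N : ℕ) : ∀ a b c d e f : ℤ, 0 < a → 0 < a * b - f ^ 2 →
    a * b * c + 2 * d * e * f - a * d ^ 2 - b * e ^ 2 - c * f ^ 2 = 1 →
    a + (a * b - f ^ 2) ≤ N → ∀ x y z : ℤ, ∃ p q r : ℤ,
      a * x ^ 2 + b * y ^ 2 + c * z ^ 2 + 2 * d * y * z + 2 * e * x * z + 2 * f * x * y
        = p ^ 2 + q ^ 2 + r ^ 2 := by
  induction N with
  | zero => intro a b c d e f ha hA _ hN; simp only [Nat.cast_zero] at hN; omega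
  | succ N ih =>
    intro a b c d e f ha hA hdet hN x y z
    push_cast at hN
    have balanced (m u : ℤ) (hm : 0 < m) : ∃ k : ℤ, 4 * (u + k * m) ^ 2 ≤ m ^ 2 := by
      refine ⟨-((2 * u + m) / (2 * m)), ?_⟩
      have h1 := Int.emod_add_mul_ediv (2 * u + m) (2 * m)
      have h2 := Int.emod_nonneg (2 * u + m) (show 2 * m ≠ 0 by omega)
      have h3 := Int.emod_lt_of_pos (2 * u + m) (show 0 < 2 * m by omega)
      set k := (2 * u + m) / (2 * m)
      have h4 : 2 * (u + -k * m) = (2 * u + m) % (2 * m) - m := by linear_combination -h1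
      nlinarith
    by_cases h1 : 4 * (a * b - f ^ 2) < 3 * a ^ 2
    · obtain ⟨k, hk⟩ := balanced a f ha
      have hA' : a * (b + 2 * k * f + k ^ 2 * a) - (f + k * a) ^ 2 = a * b - f ^ 2 := by ring
      have hb : 0 < b + 2 * k * f + k ^ 2 * a := by
        by_contra! h
        nlinarith [mul_nonneg ha.le (neg_nonneg.2 h), sq_nonneg (f + k * a)]
      have hb' : b + 2 * k * f + k ^ 2 * a < a := by
        by_contra! h
        nlinarith [mul_le_mul_of_nonneg_left h ha.le]
      obtain ⟨p, q, r, h⟩ := ih (b + 2 * k * f + k ^ 2 * a) a c e (d + k * e) (f + k * a) hb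
        (by linarith) (by linear_combination hdet) (by linarith) y (x - k * y) z
      exact ⟨p, q, r, by rw [← h]; ring⟩
    by_cases h2 : 4 * a < 3 * (a * b - f ^ 2) ^ 2
    · obtain ⟨k, hk⟩ := balanced (a * b - f ^ 2) (a * d - e * f) hA
      set A := a * b - f ^ 2 with hAdef
      set B := a * (c + 2 * k * d + k ^ 2 * b) - (e + k * f) ^ 2 with hB
      have hAB : A * B = a + (a * d - e * f + k * A) ^ 2 := by
        rw [hB, hAdef]; linear_combination a * hdet
      have hB0 : 0 < B := by
        by_contra! h
        nlinarith [mul_nonneg hA.le (neg_nonneg.2 h), sq_nonneg (a * d - e * f + k * A)]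
      have hBA : B < A := by
        by_contra! h
        nlinarith [mul_le_mul_of_nonneg_left h hA.le]
      obtain ⟨p, q, r, h⟩ := ih a (c + 2 * k * d + k ^ 2 * b) b (d + k * b) f (e + k * f) ha
        hB0 (by linear_combination hdet) (by linarith) x z (y - k * z)
      exact ⟨p, q, r, by rw [← h]; ring⟩
    push Not at h1 h2
    obtain ⟨A, hAdef⟩ : ∃ A, A = a * b - f ^ 2 := ⟨_, rfl⟩
    rw [← hAdef] at h1 h2 hA
    have ha1 : a = 1 := by
      by_contra h
      have : 2 ≤ a := by omega
      rcases le_total a A with h | h <;> nlinarith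
    have hA1 : A = 1 := by
      subst ha1
      by_contra h
      have : 2 ≤ A := by omega
      nlinarith
    subst ha1
    refine ⟨x + f * y + e * z, y + (d - e * f) * z, z, ?_⟩
    have hb : b = 1 + f ^ 2 := by linarith
    subst hb
    linear_combination z ^ 2 * hdet

theorem exists_sum_three_sq_of_sq_add_eq {n d t a b : ℤ} (hd : 0 < d) (hb : 0 < b)
    (hbn : b + 1 = d * n) (h : t ^ 2 + d = a * b) : ∃ p q r : ℤ, n = p ^ 2 + q ^ 2 + r ^ 2 := by
  have ha : 0 < a := pos_of_mul_pos_left (by nlinarith [sq_nonneg t]) hb.le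
  obtain ⟨p, q, r, h⟩ := exists_sum_three_sq_of_det_eq_one (a + (a * b - t ^ 2)).toNat
    a b n 0 1 t ha (by linarith) (by linear_combination -n * h - hbn) (Int.self_le_toNat _) 0 0 1
  exact ⟨p, q, r, by rw [← h]; ring⟩

open NumberTheorySymbols in
theorem jacobiSym_neg_eq_one {d n p : ℕ} (hd : d % 8 = 3) (hp : Odd p)
    (h : 2 * p + 1 = d * n) : J(-(d : ℤ) | p) = 1 := by
  have hdo : Odd d := Nat.odd_iff.2 (by omega)
  have key : J((p : ℤ) | d) = 1 := by
    have h2 : J(-2 | d) = 1 := by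
      rw [jacobiSym.at_neg_two hdo, ZMod.χ₈'_nat_eq_if_mod_eight]
      simp [hd, show d % 2 = 1 by omega]
    have h3 : J(-2 * (p : ℤ) | d) = 1 := by
      rw [← jacobiSym.one_left d]
      apply jacobiSym.mod_left'
      rw [show (-2 * (p : ℤ)) = 1 + d * (-n) by push_cast [← @Nat.cast_inj ℤ] at h; linarith]
      simp
    rwa [jacobiSym.mul_left, h2, one_mul] at h3
  rw [← neg_one_mul, jacobiSym.mul_left, jacobiSym.at_neg_one hp]
  rcases Nat.odd_mod_four_iff.1 (Nat.odd_iff.1 hp) with hp4 | hp4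
  · rw [ZMod.χ₄_nat_one_mod_four hp4, ← jacobiSym.quadratic_reciprocity_one_mod_four hp4 hdo, key,
      one_mul]
  · rw [ZMod.χ₄_nat_three_mod_four hp4,
      jacobiSym.quadratic_reciprocity_three_mod_four (by omega) hp4, key]
    norm_num

/-- Every natural number congruent to `1` modulo `4` is a sum of three squares. -/
theorem exists_sum_three_sq_of_mod_four_eq_one {n : ℕ} (hn : n % 4 = 1) :
    ∃ p q r : ℤ, (n : ℤ) = p ^ 2 + q ^ 2 + r ^ 2 := by
  obtain ⟨s, hs⟩ : ∃ s, 2 * s + 1 = 3 * n := ⟨(3 * n - 1) / 2, by omega⟩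
  have hcop : Nat.Coprime s (4 * n) := by
    refine Nat.Coprime.mul_right ?_ ?_
    · exact Nat.Coprime.pow_right 2 (Nat.coprime_two_right.2 (Nat.odd_iff.2 (by omega)))
    · have : IsCoprime (s : ℤ) n := ⟨-2, 3, by zify at hs; linarith⟩
      exact Nat.isCoprime_iff_coprime.1 this
  obtain ⟨p, hps, hp, hpm⟩ :=
    Nat.forall_exists_prime_gt_and_modEq s (show 4 * n ≠ 0 by omega) hcop
  obtain ⟨j, hj⟩ := (Nat.modEq_iff_dvd' hps.le).1 hpm.symm
  have hpj : p = s + 4 * n * j := by omega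
  have hpo : Odd p := Nat.odd_iff.2 (by rw [hpj, mul_assoc]; omega)
  have hpd : 2 * p + 1 = (8 * j + 3) * n := by rw [hpj]; linarith
  have := Fact.mk hp
  have hJ := jacobiSym_neg_eq_one (d := 8 * j + 3) (by omega) hpo hpd
  obtain ⟨u, hu⟩ := ZMod.isSquare_of_jacobiSym_eq_one hJ
  have hdvd (t : ℤ) (ht : (t : ZMod p) = u) : (p : ℤ) ∣ t ^ 2 + (8 * j + 3 : ℕ) := by
    rw [← ZMod.intCast_zmod_eq_zero_iff_dvd]
    push_cast at hu ⊢
    rw [ht]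
    linear_combination -hu
  obtain ⟨t, hto, ht⟩ : ∃ t : ℤ, Odd t ∧ (p : ℤ) ∣ t ^ 2 + (8 * j + 3 : ℕ) := by
    obtain ⟨t, rfl⟩ := ZMod.intCast_surjective u
    rcases Int.even_or_odd t with he | ho
    · exact ⟨t + p, he.add_odd (by exact_mod_cast hpo), hdvd _ (by simp)⟩
    · exact ⟨t, ho, hdvd t rfl⟩
  have h2 : (2 : ℤ) ∣ t ^ 2 + (8 * j + 3 : ℕ) :=
    (hto.pow.add_odd (by exact_mod_cast Nat.odd_iff.2 (by omega))).two_dvd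
  have hcop2 : IsCoprime (2 : ℤ) p := by
    exact_mod_cast Nat.isCoprime_iff_coprime.2 (Nat.coprime_two_left.2 hpo)
  obtain ⟨a, ha⟩ := hcop2.mul_dvd h2 ht
  exact exists_sum_three_sq_of_sq_add_eq (a := a) (b := 2 * p) (d := (8 * j + 3 : ℕ))
    (by positivity)
    (by have := hp.pos; positivity) (by exact_mod_cast hpd) (by rw [ha]; ring)

theorem stmt_15 (m : ℕ) :
    ∃ a b c : ℕ, 4 * m + 1 = a ^ 2 + b ^ 2 + c ^ 2 ∧ Even a ∧ b % 2 ≠ c % 2 := by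
  obtain ⟨p, q, r, h⟩ := exists_sum_three_sq_of_mod_four_eq_one (n := 4 * m + 1) (by omega)
  rw [← Int.natAbs_sq p, ← Int.natAbs_sq q, ← Int.natAbs_sq r] at h
  norm_cast at h
  generalize p.natAbs = a at h
  generalize q.natAbs = b at h
  generalize r.natAbs = c at h
  have key (x : ℕ) : (x % 2 = 0 ∧ x ^ 2 % 4 = 0) ∨ (x % 2 = 1 ∧ x ^ 2 % 4 = 1) := by
    rcases Nat.mod_two_eq_zero_or_one x with hx | hx
    · exact .inl ⟨hx, Nat.mod_eq_zero_of_dvd (pow_dvd_pow_of_dvd (Nat.dvd_of_mod_eq_zero hx) 2)⟩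
    · refine .inr ⟨hx, ?_⟩
      have := Nat.odd_mod_four_iff.1 hx
      rcases this with h | h <;> simp [Nat.pow_mod, h]
  simp only [Nat.even_iff]
  rcases key a with ha | ha
  · exact ⟨a, b, c, h, ha.1, by have := key b; have := key c; omega⟩
  · exact ⟨b, a, c, by omega, by have := key b; have := key c; omega,
      by have := key b; have := key c; omega⟩
end
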